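/- Fix constants 0 < α_lo < α_hi < 1 and β > 0. There exists a constant c = c(α_lo, α_hi, β) > 0 such that the following holds for every d, n ≥ 1, m ≥ 0 and every product model 𝒫 = { ∏_{j=1}^d p_{θ_j} : θ_j ∈ Θ_j } on ∏_{j=1}^d 𝒳_j: if for each j ∈ [d] there exist θ_{j,+}, θ_{j,−} ∈ Θ_j and a number α_j ∈ (α_lo, α_hi) such that ‖p_{θ_{j,+}}^{⊗n} − p_{θ_{j,−}}^{⊗n}‖_TV ≤ α_j − β/√d and ‖p_{θ_{j,+}}^{⊗(n+m)} − p_{θ_{j,−}}^{⊗(n+m)}‖_TV ≥ α_j + β/√d, then the minimax sample-amplification error satisfies ε*(𝒫,n,m) ≥ c. -/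

import Mathlib

open MeasureTheory ProbabilityTheory
open scoped ENNReal NNReal

/-- Total variation distance between two measures: `sup_A |P(A) - Q(A)|`. -/
noncomputable def tvDist {X : Type*} [MeasurableSpace X] (μ ν : Measure X) : ℝ :=
  ⨆ A : {s : Set X // MeasurableSet s}, |(μ A).toReal - (ν A).toReal|

/-- Minimax sample amplification error `ε*(𝒫, n, m)` for the family `(P θ)_θ`. -/
noncomputable def ampErr {X Θ : Type*} [MeasurableSpace X] (P : Θ → Measure X)
    (n m : ℕ) : ℝ :=
  ⨅ T : {T : Kernel (Fin n → X) (Fin (n + m) → X) // IsMarkovKernel T},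
    ⨆ θ : Θ, tvDist (Measure.pi fun _ : Fin (n + m) => P θ)
      ((Measure.pi fun _ : Fin n => P θ).bind T.1)

/-- The sign `±1` attached to a Boolean. -/
def boolSign (b : Bool) : ℝ := if b then 1 else -1

lemma withDensity_two_sided {Y : Type*} [MeasurableSpace Y] (R : Bool → Measure Y)
    [∀ b, IsProbabilityMeasure (R b)] :
    ∃ ν : Measure Y, IsProbabilityMeasure ν ∧ ∃ h : Y → ℝ, Measurable h ∧ (∀ y, |h y| ≤ 1) ∧
      ∀ b, R b = ν.withDensity (fun y => ENNReal.ofReal (1 + boolSign b * h y)) := by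
  let ν : Measure Y := (2⁻¹ : ℝ≥0∞) • (R true + R false)
  have hν : IsProbabilityMeasure ν := ⟨by
    simp only [ν, Measure.smul_apply, Measure.add_apply, measure_univ, smul_eq_mul, one_add_one_eq_two]
    exact ENNReal.inv_mul_cancel (by simp) (by simp)⟩
  have h2ν : R true + R false = ν.withDensity (fun _ => 2) := by
    rw [withDensity_const, smul_smul, ENNReal.mul_inv_cancel (by simp) (by simp), one_smul]
  have hac (b : Bool) : R b ≪ ν := by
    refine Measure.AbsolutelyContinuous.trans (?_ : R b ≪ R true + R false) ?_
    · refine Measure.absolutelyContinuous_of_le ?_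
      cases b
      · exact Measure.le_add_left le_rfl
      · exact Measure.le_add_right le_rfl
    · rw [h2ν]; exact withDensity_absolutelyContinuous _ _
  have hd (b : Bool) : ν.withDensity ((R b).rnDeriv ν) = R b :=
    Measure.withDensity_rnDeriv_eq _ _ (hac b)
  have hsum : (R true).rnDeriv ν + (R false).rnDeriv ν =ᵐ[ν] fun _ => 2 := by
    rw [← withDensity_eq_iff_of_sigmaFinite (by fun_prop) (by fun_prop),
      withDensity_add_left (by fun_prop), hd, hd, h2ν]
  let g : Y → ℝ := fun y => ((R true).rnDeriv ν y).toReal - 1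
  refine ⟨ν, hν, fun y => max (-1) (min 1 (g y)), by fun_prop, fun y => ?_, fun b => ?_⟩
  · rw [abs_le]
    exact ⟨le_max_left _ _, max_le (by norm_num) (min_le_left _ _)⟩
  · conv_lhs => rw [← hd b]
    refine withDensity_congr_ae ?_
    filter_upwards [hsum] with y hy
    simp only [Pi.add_apply] at hy
    have e1 : (R true).rnDeriv ν y ≠ ⊤ := fun h => by simp [h] at hy
    have e2 : (R false).rnDeriv ν y ≠ ⊤ := fun h => by simp [h] at hy
    have hy' := congrArg ENNReal.toReal hy
    rw [ENNReal.toReal_add e1 e2] at hy'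
    have p1 : 0 ≤ ((R true).rnDeriv ν y).toReal := ENNReal.toReal_nonneg
    have p2 : 0 ≤ ((R false).rnDeriv ν y).toReal := ENNReal.toReal_nonneg
    have hy'' : ((R true).rnDeriv ν y).toReal + ((R false).rnDeriv ν y).toReal = 2 := by
      simpa using hy'
    rw [min_eq_right (by simp only [g]; linarith), max_eq_right (by simp only [g]; linarith)]
    cases b
    · rw [← ENNReal.ofReal_toReal e2]
      congr 1
      simp only [boolSign, g]
      norm_num
      linarith
    · rw [← ENNReal.ofReal_toReal e1]
      congr 1
      simp only [boolSign, g]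
      norm_num

lemma one_add_boolSign_mul_nonneg {t : ℝ} (ht : |t| ≤ 1) (b : Bool) : 0 ≤ 1 + boolSign b * t := by
  rw [abs_le] at ht
  cases b <;> simp [boolSign] <;> linarith

lemma integrable_of_abs_le {Y : Type*} [MeasurableSpace Y] {ν : Measure Y} [IsFiniteMeasure ν]
    {f : Y → ℝ} {C : ℝ} (hf : Measurable f) (hC : ∀ y, |f y| ≤ C) : Integrable f ν :=
  Integrable.of_bound hf.aestronglyMeasurable C (Filter.Eventually.of_forall hC)

lemma integral_withDensity_ofReal {Y : Type*} [MeasurableSpace Y] (ν : Measure Y)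
    {g : Y → ℝ} (hg : Measurable g) (h0 : ∀ y, 0 ≤ g y) (f : Y → ℝ) :
    ∫ y, f y ∂(ν.withDensity fun y => ENNReal.ofReal (g y)) = ∫ y, g y * f y ∂ν := by
  rw [integral_withDensity_eq_integral_toReal_smul (by fun_prop) (by simp)]
  simp [ENNReal.toReal_ofReal (h0 _)]

lemma integral_eq_zero_of_two_sided {Y : Type*} [MeasurableSpace Y] {R : Bool → Measure Y}
    [∀ b, IsProbabilityMeasure (R b)] {ν : Measure Y} [IsProbabilityMeasure ν] {h : Y → ℝ}
    (hm : Measurable h) (h1 : ∀ y, |h y| ≤ 1)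
    (hR : ∀ b, R b = ν.withDensity (fun y => ENNReal.ofReal (1 + boolSign b * h y))) :
    ∫ y, h y ∂ν = 0 := by
  have := integral_withDensity_ofReal ν (g := fun y => 1 + boolSign true * h y) (by fun_prop)
    (fun y => one_add_boolSign_mul_nonneg (h1 y) true) (fun _ => 1)
  rw [← hR true] at this
  simp only [boolSign, integral_const, probReal_univ, smul_eq_mul, mul_one, if_true, one_mul] at this
  rw [integral_add (integrable_const _) (integrable_of_abs_le hm h1)] at this
  simpa using this

lemma integral_sub_integral_le_integral_abs {Y : Type*} [MeasurableSpace Y] {R : Bool → Measure Y}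
    [∀ b, IsProbabilityMeasure (R b)] {ν : Measure Y} [IsProbabilityMeasure ν] {h : Y → ℝ}
    (hm : Measurable h) (h1 : ∀ y, |h y| ≤ 1)
    (hR : ∀ b, R b = ν.withDensity (fun y => ENNReal.ofReal (1 + boolSign b * h y)))
    {f : Y → ℝ} (hf : Measurable f) (f0 : ∀ y, 0 ≤ f y) (f1 : ∀ y, f y ≤ 1) :
    |∫ y, f y ∂(R true) - ∫ y, f y ∂(R false)| ≤ ∫ y, |h y| ∂ν := by
  have hb (b : Bool) : ∀ y, |(1 + boolSign b * h y) * f y| ≤ 2 := fun y => by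
    have := one_add_boolSign_mul_nonneg (h1 y) b
    have h3 := one_add_boolSign_mul_nonneg (h1 y) (!b)
    have h2 : 1 + boolSign b * h y ≤ 2 := by
      cases b <;> simp [boolSign] at * <;> linarith
    rw [abs_of_nonneg (mul_nonneg this (f0 y))]
    nlinarith [f0 y, f1 y]
  have hint : Integrable h ν := integrable_of_abs_le hm h1
  have key (b : Bool) : ∫ y, f y ∂(R b) = ∫ y, (1 + boolSign b * h y) * f y ∂ν := by
    conv_lhs => rw [hR b]
    exact integral_withDensity_ofReal ν (by fun_prop)
      (fun y => one_add_boolSign_mul_nonneg (h1 y) b) f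
  have h0 := integral_eq_zero_of_two_sided hm h1 hR
  have hi (b : Bool) : Integrable (fun y => (1 + boolSign b * h y) * f y) ν :=
    integrable_of_abs_le (by fun_prop) (hb b)
  have hd : Integrable (fun y => (1 + boolSign true * h y) * f y
      - (1 + boolSign false * h y) * f y) ν := (hi true).sub (hi false)
  rw [key, key, ← integral_sub (hi _) (hi _), ← sub_zero (∫ y, _ ∂ν), ← h0,
    ← integral_sub hd hint]
  refine (abs_integral_le_integral_abs).trans (integral_mono_of_nonneg
    (Filter.Eventually.of_forall fun y => abs_nonneg _) hint.abs
    (Filter.Eventually.of_forall fun y => ?_))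
  have e : (1 + boolSign true * h y) * f y - (1 + boolSign false * h y) * f y - h y
      = (2 * f y - 1) * h y := by simp [boolSign]; ring
  simp only [e, abs_mul]
  have : |2 * f y - 1| ≤ 1 := by
    rw [abs_le]; constructor <;> linarith [f0 y, f1 y]
  nlinarith [abs_nonneg (h y)]

lemma abs_measure_sub_le_tvDist {Y : Type*} [MeasurableSpace Y] (μ ν : Measure Y)
    [IsProbabilityMeasure μ] [IsProbabilityMeasure ν] {A : Set Y} (hA : MeasurableSet A) :
    |μ.real A - ν.real A| ≤ tvDist μ ν := by
  refine le_ciSup (f := fun A : {s : Set Y // MeasurableSet s} =>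
    |(μ A).toReal - (ν A).toReal|) ⟨1, ?_⟩ ⟨A, hA⟩
  rintro _ ⟨B, rfl⟩
  have a := measureReal_le_one (μ := μ) (s := B)
  have b := measureReal_le_one (μ := ν) (s := B)
  have c := measureReal_nonneg (μ := μ) (s := B)
  have d := measureReal_nonneg (μ := ν) (s := B)
  simp only [Measure.real] at a b c d
  exact abs_le.2 ⟨by linarith, by linarith⟩

lemma tvDist_le_one {Y : Type*} [MeasurableSpace Y] (μ ν : Measure Y)
    [IsProbabilityMeasure μ] [IsProbabilityMeasure ν] : tvDist μ ν ≤ 1 := by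
  have : Nonempty {s : Set Y // MeasurableSet s} := ⟨⟨∅, .empty⟩⟩
  refine ciSup_le fun B => ?_
  have a := measureReal_le_one (μ := μ) (s := B)
  have b := measureReal_le_one (μ := ν) (s := B)
  have c := measureReal_nonneg (μ := μ) (s := B)
  have d := measureReal_nonneg (μ := ν) (s := B)
  simp only [Measure.real] at a b c d
  exact abs_le.2 ⟨by linarith, by linarith⟩

lemma tvDist_eq_integral_abs {Y : Type*} [MeasurableSpace Y] {R : Bool → Measure Y}
    [∀ b, IsProbabilityMeasure (R b)] {ν : Measure Y} [IsProbabilityMeasure ν] {h : Y → ℝ}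
    (hm : Measurable h) (h1 : ∀ y, |h y| ≤ 1)
    (hR : ∀ b, R b = ν.withDensity (fun y => ENNReal.ofReal (1 + boolSign b * h y))) :
    tvDist (R true) (R false) = ∫ y, |h y| ∂ν := by
  have hint : Integrable h ν := integrable_of_abs_le hm h1
  apply le_antisymm
  · have : Nonempty {s : Set Y // MeasurableSet s} := ⟨⟨∅, .empty⟩⟩
    refine ciSup_le fun B => ?_
    have := integral_sub_integral_le_integral_abs hm h1 hR (f := B.1.indicator 1)
      (measurable_one.indicator B.2) (fun y => Set.indicator_nonneg (by simp) y)
      (fun y => Set.indicator_le_self' (by simp) y)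
    rwa [integral_indicator_one B.2, integral_indicator_one B.2] at this
  · have hA : MeasurableSet {y | 0 ≤ h y} := measurableSet_le measurable_const hm
    refine le_trans (le_of_eq ?_) ((le_abs_self _).trans (abs_measure_sub_le_tvDist _ _ hA))
    have key (b : Bool) : (R b).real {y | 0 ≤ h y} =
        ∫ y, (1 + boolSign b * h y) * ({y | 0 ≤ h y}.indicator 1 y) ∂ν := by
      rw [← integral_indicator_one hA]
      conv_lhs => rw [hR b]
      exact integral_withDensity_ofReal ν (by fun_prop)
        (fun y => one_add_boolSign_mul_nonneg (h1 y) b) _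
    have e : ∀ y, |h y| = ((1 + boolSign true * h y) * ({y | 0 ≤ h y}.indicator 1 y)
       - (1 + boolSign false * h y) * ({y | 0 ≤ h y}.indicator 1 y)) - h y := fun y => by
      by_cases hy : 0 ≤ h y
      · simp [hy, boolSign, abs_of_nonneg]
      · simp [hy, abs_of_neg (not_le.1 hy)]
    have hi (b : Bool) : Integrable
        (fun y => (1 + boolSign b * h y) * ({y | 0 ≤ h y}.indicator (1 : Y → ℝ) y)) ν :=
      ((integrable_const (1 : ℝ)).add (hint.const_mul _)).mul_bdd (c := 1)
        (measurable_one.indicator hA).aestronglyMeasurable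
        (Filter.Eventually.of_forall fun y => by
          simp only [Set.indicator]; split_ifs <;> simp)
    have hd : Integrable (fun y => (1 + boolSign true * h y) * ({y | 0 ≤ h y}.indicator 1 y)
      - (1 + boolSign false * h y) * ({y | 0 ≤ h y}.indicator 1 y)) ν := (hi true).sub (hi false)
    simp_rw [e]
    rw [integral_sub hd hint, integral_sub (hi _) (hi _), ← key, ← key,
      integral_eq_zero_of_two_sided hm h1 hR, sub_zero]

lemma integral_sub_integral_le_tvDist {Y : Type*} [MeasurableSpace Y] (μ ν : Measure Y)
    [IsProbabilityMeasure μ] [IsProbabilityMeasure ν]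
    {f : Y → ℝ} (hf : Measurable f) (f0 : ∀ y, 0 ≤ f y) (f1 : ∀ y, f y ≤ 1) :
    ∫ y, f y ∂μ - ∫ y, f y ∂ν ≤ tvDist μ ν := by
  let R : Bool → Measure Y := fun b => bif b then μ else ν
  have : ∀ b, IsProbabilityMeasure (R b) := by
    intro b; cases b <;> assumption
  obtain ⟨η, hη, h, hm, h1, hR⟩ := withDensity_two_sided R
  have e := tvDist_eq_integral_abs hm h1 hR
  have := integral_sub_integral_le_integral_abs hm h1 hR hf f0 f1
  exact (le_abs_self _).trans (this.trans e.ge)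

lemma pi_pi_eq_map_swap {ι κ : Type*} [Fintype ι] [Fintype κ] {X : κ → Type*}
    [∀ j, MeasurableSpace (X j)] (p : ∀ j, Measure (X j)) [∀ j, IsProbabilityMeasure (p j)] :
    (Measure.pi fun _ : ι => Measure.pi p) =
      (Measure.pi fun j => Measure.pi fun _ : ι => p j).map fun z i j => z j i := by
  have hmeas : Measurable fun (z : ∀ j, ι → X j) (i : ι) (j : κ) => z j i := by fun_prop
  refine Measure.pi_eq_generateFrom
    (C := fun _ => Set.univ.pi '' Set.univ.pi fun j => {s : Set (X j) | MeasurableSet s})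
    (fun _ => generateFrom_pi) (fun _ => isPiSystem_pi)
    (fun _ => Measure.FiniteSpanningSetsIn.mk (fun _ => Set.univ)
      (fun _ => ⟨fun _ => Set.univ, by simp, by simp⟩) (by simp) (Set.iUnion_const _)) ?_
  intro s hs
  choose t ht hts using hs
  have hs' : Set.univ.pi s = {x | ∀ i j, x i j ∈ t i j} := by
    ext x; simp [← hts]
  have hm : MeasurableSet (Set.univ.pi s) := by
    refine MeasurableSet.univ_pi fun i => ?_
    rw [← hts]
    exact MeasurableSet.univ_pi fun j => ht i j (Set.mem_univ j)
  rw [Measure.map_apply hmeas hm]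
  have hpre : (fun (z : ∀ j, ι → X j) (i : ι) (j : κ) => z j i) ⁻¹' (Set.univ.pi s) =
      Set.univ.pi fun j => Set.univ.pi fun i => t i j := by
    rw [hs']; ext z; simp only [Set.mem_preimage, Set.mem_ofPred_eq, Set.mem_pi, Set.mem_univ,
      true_imp_iff]
    exact forall_comm
  rw [hpre]
  simp_rw [← hts, Measure.pi_pi]
  exact Finset.prod_comm

lemma pi_withDensity_ofReal {κ : Type*} [Fintype κ] {Y : κ → Type*} [∀ j, MeasurableSpace (Y j)]
    (ν : ∀ j, Measure (Y j)) [∀ j, IsProbabilityMeasure (ν j)] (g : ∀ j, Y j → ℝ)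
    (hg : ∀ j, Measurable (g j)) (h0 : ∀ j y, 0 ≤ g j y) {C : ℝ} (hC : ∀ j y, |g j y| ≤ C) :
    (Measure.pi fun j => (ν j).withDensity fun y => ENNReal.ofReal (g j y)) =
      (Measure.pi ν).withDensity fun z => ENNReal.ofReal (∏ j, g j (z j)) := by
  have hgi (j) : Integrable (g j) (ν j) := integrable_of_abs_le (hg j) (hC j)
  have hfin (j) : IsFiniteMeasure ((ν j).withDensity fun y => ENNReal.ofReal (g j y)) :=
    isFiniteMeasure_withDensity_ofReal (hgi j).2
  refine Measure.pi_eq fun s hs => ?_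
  rw [withDensity_apply _ (MeasurableSet.univ_pi hs), Measure.restrict_pi_pi,
    ← ofReal_integral_eq_lintegral_ofReal, integral_fintype_prod_eq_prod,
    ENNReal.ofReal_prod_of_nonneg (fun j _ => integral_nonneg (h0 j))]
  · refine Finset.prod_congr rfl fun j _ => ?_
    rw [withDensity_apply _ (hs j), ofReal_integral_eq_lintegral_ofReal (hgi j).restrict
      (Filter.Eventually.of_forall (h0 j))]
  · exact Integrable.fintype_prod_dep (f := g) fun j => (hgi j).restrict
  · exact Filter.Eventually.of_forall fun z => Finset.prod_nonneg fun j _ => h0 j _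

lemma pi_scaled_sum_moments {d : ℕ} (hd : 1 ≤ d) {Y : Fin d → Type*} [∀ j, MeasurableSpace (Y j)]
    (μ : ∀ j, Measure (Y j)) [∀ j, IsProbabilityMeasure (μ j)] (c : ∀ j, Y j → ℝ)
    (hc : ∀ j, Measurable (c j)) {C : ℝ} (hb : ∀ j y, |c j y| ≤ C)
    (h0 : ∀ j, ∫ y, c j y ∂(μ j) = 0) (h1 : ∀ j, ∫ y, c j y ^ 2 ∂(μ j) ≤ 1) :
    ∫ z, (∑ j, c j (z j)) / Real.sqrt d ∂(Measure.pi μ) = 0 ∧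
    ∫ z, ((∑ j, c j (z j)) / Real.sqrt d) ^ 2 ∂(Measure.pi μ) ≤ 1 := by
  have hLp (j) : MemLp (c j) 2 (μ j) :=
    MemLp.of_bound (hc j).aestronglyMeasurable C (Filter.Eventually.of_forall (hb j))
  have hi (j) : Integrable (fun z : ∀ j, Y j => c j (z j)) (Measure.pi μ) :=
    integrable_of_abs_le (by fun_prop) (fun z => hb j (z j))
  have e0 : ∫ z, (∑ j, c j (z j)) ∂(Measure.pi μ) = 0 := by
    rw [integral_finsetSum _ fun j _ => hi j]
    refine Finset.sum_eq_zero fun j _ => ?_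
    rw [integral_comp_eval (hc j).aestronglyMeasurable, h0]
  have hv := variance_sum_pi hLp
  have efun : (∑ i, fun z : ∀ j, Y j => c i (z i)) = fun z => ∑ j, c j (z j) := by
    ext z; simp
  have hsm : Measurable fun z : ∀ j, Y j => ∑ j, c j (z j) :=
    Finset.measurable_sum _ fun j _ => (hc j).comp (measurable_pi_apply j)
  rw [efun, variance_of_integral_eq_zero hsm.aemeasurable e0] at hv
  have hd0 : (0 : ℝ) < d := by exact_mod_cast hd
  refine ⟨by rw [integral_div, e0, zero_div], ?_⟩
  simp_rw [div_pow, Real.sq_sqrt hd0.le]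
  rw [integral_div, div_le_one hd0, hv]
  refine (Finset.sum_le_sum fun j _ => ?_).trans (by simp : ∑ j : Fin d, (1 : ℝ) ≤ d)
  rw [variance_of_integral_eq_zero (hc j).aemeasurable (h0 j)]
  exact h1 j

lemma integral_bind_eq {X Y : Type*} [MeasurableSpace X] [MeasurableSpace Y] (μ : Measure X)
    [IsProbabilityMeasure μ] (T : Kernel X Y) [IsMarkovKernel T] {f : Y → ℝ}
    (hf : Measurable f) {C : ℝ} (hC : ∀ y, |f y| ≤ C) :
    ∫ y, f y ∂(μ.bind T) = ∫ x, ∫ y, f y ∂(T x) ∂μ := by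
  have h : μ.bind T = (T ∘ₖ Kernel.const Unit μ) () := by
    rw [Kernel.comp_apply, Kernel.const_apply]
  have : IsProbabilityMeasure (μ.bind T) := by rw [h]; infer_instance
  have hi : Integrable f (μ.bind T) := integrable_of_abs_le hf hC
  rw [h] at hi ⊢
  rw [Kernel.integral_comp hi, Kernel.const_apply]

/-- The conditional law of the signs given the observation: a product over coordinates. -/
noncomputable def signWeight {d : ℕ} (t : Fin d → ℝ) (θ : Fin d → Bool) : ℝ :=
  ∏ j, (1 + boolSign (θ j) * t j) / 2

lemma signWeight_nonneg {d : ℕ} {t : Fin d → ℝ} (ht : ∀ j, |t j| ≤ 1) (θ : Fin d → Bool) :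
    0 ≤ signWeight t θ :=
  Finset.prod_nonneg fun j _ => div_nonneg (one_add_boolSign_mul_nonneg (ht j) _) zero_le_two

lemma signWeight_moments {d : ℕ} (hd : 1 ≤ d) {t e : Fin d → ℝ} (ht : ∀ j, |t j| ≤ 1)
    (he : ∀ j, |e j| ≤ 1) :
    ∑ θ, signWeight t θ = 1 ∧
    ∑ θ, signWeight t θ * ((∑ j, e j * (boolSign (θ j) - t j)) / Real.sqrt d) = 0 ∧
    ∑ θ, signWeight t θ * ((∑ j, e j * (boolSign (θ j) - t j)) / Real.sqrt d) ^ 2 ≤ 1 := by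
  let μ : Fin d → Measure Bool := fun j =>
    ENNReal.ofReal ((1 + boolSign true * t j) / 2) • Measure.dirac true +
    ENNReal.ofReal ((1 + boolSign false * t j) / 2) • Measure.dirac false
  have hw (j b) : 0 ≤ (1 + boolSign b * t j) / 2 :=
    div_nonneg (one_add_boolSign_mul_nonneg (ht j) _) zero_le_two
  have hμ (j) : IsProbabilityMeasure (μ j) := ⟨by
    simp only [μ, Measure.add_apply, Measure.smul_apply, measure_univ, smul_eq_mul, mul_one]
    rw [← ENNReal.ofReal_add (hw _ _) (hw _ _)]
    simp [boolSign]
    ring⟩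
  have hsing (j b) : (μ j).real {b} = (1 + boolSign b * t j) / 2 := by
    have := hw j b
    cases b <;> simpa [μ, Measure.real] using this
  have hone (j) (f : Bool → ℝ) : ∫ b, f b ∂(μ j) =
      (1 + t j) / 2 * f true + (1 - t j) / 2 * f false := by
    rw [integral_fintype .of_finite]
    simp [hsing, boolSign, sub_eq_add_neg]
  have hall (f : (Fin d → Bool) → ℝ) : ∫ θ, f θ ∂(Measure.pi μ) = ∑ θ, signWeight t θ * f θ := by
    rw [integral_fintype .of_finite]
    refine Finset.sum_congr rfl fun θ _ => ?_
    rw [smul_eq_mul, signWeight, measureReal_def, Measure.pi_singleton, ENNReal.toReal_prod]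
    simp_rw [← measureReal_def, hsing]
  have hm := pi_scaled_sum_moments hd μ (fun j b => e j * (boolSign b - t j))
    (fun j => .of_discrete) (C := 2) (fun j b => ?_) (fun j => ?_) (fun j => ?_)
  · rw [hall, hall] at hm
    refine ⟨?_, hm⟩
    have := hall fun _ => 1
    simpa using this.symm
  · have h1 := abs_le.1 (ht j)
    rw [abs_mul]
    have : |boolSign b - t j| ≤ 2 := by
      cases b <;> simp only [boolSign] <;> rw [abs_le] <;> constructor <;> norm_num <;> linarith
    nlinarith [abs_nonneg (e j), abs_nonneg (boolSign b - t j), he j]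
  · rw [hone]; simp [boolSign]; ring
  · rw [hone]
    have h1 := (sq_le_one_iff_abs_le_one _).2 (ht j)
    have h2 := (sq_le_one_iff_abs_le_one _).2 (he j)
    have : (1 + t j) / 2 * (e j * (boolSign true - t j)) ^ 2 +
        (1 - t j) / 2 * (e j * (boolSign false - t j)) ^ 2 = e j ^ 2 * (1 - t j ^ 2) := by
      simp [boolSign]; ring
    rw [this]
    nlinarith [sq_nonneg (t j), sq_nonneg (e j)]

/-- Truncation of the affine function `u ↦ 1/2 + k u` to the unit interval. -/
noncomputable def ramp (k u : ℝ) : ℝ := max 0 (min 1 (1 / 2 + k * u))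

lemma ramp_nonneg (k u : ℝ) : 0 ≤ ramp k u := le_max_left _ _

lemma ramp_le_one (k u : ℝ) : ramp k u ≤ 1 := max_le zero_le_one (min_le_left _ _)

lemma ramp_mono {k : ℝ} (hk : 0 ≤ k) {u v : ℝ} (h : u ≤ v) : ramp k u ≤ ramp k v := by
  unfold ramp; gcongr

lemma ramp_le (k u : ℝ) : ramp k u ≤ 1 / 2 + k * u + k ^ 2 / 2 * u ^ 2 := by
  refine max_le (by nlinarith [sq_nonneg (k * u + 1)]) ?_
  exact (min_le_right _ _).trans (by nlinarith [sq_nonneg (k * u)])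

lemma le_ramp (k u : ℝ) : 1 / 2 + k * u - k ^ 2 / 2 * u ^ 2 ≤ ramp k u := by
  refine le_trans ?_ (le_max_right _ _)
  exact le_min (by nlinarith [sq_nonneg (k * u - 1)]) (by nlinarith [sq_nonneg (k * u)])

lemma measurable_ramp (k : ℝ) : Measurable (ramp k) := by
  unfold ramp; fun_prop

lemma sum_signWeight_ramp_le {d : ℕ} (hd : 1 ≤ d) {t e : Fin d → ℝ} (ht : ∀ j, |t j| ≤ 1)
    (he : ∀ j, |e j| ≤ 1) {k a v : ℝ} (hk : 0 ≤ k) (hv : (∑ j, |t j| - a) / Real.sqrt d ≤ v) :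
    ∑ θ, signWeight t θ * ramp k ((∑ j, e j * boolSign (θ j) - a) / Real.sqrt d) ≤
      1 / 2 + k * v + k ^ 2 / 2 * (1 + v ^ 2) := by
  obtain ⟨m0, m1, m2⟩ := signWeight_moments hd ht he
  set U : (Fin d → Bool) → ℝ := fun θ => (∑ j, e j * (boolSign (θ j) - t j)) / Real.sqrt d
  have hle (θ : Fin d → Bool) : (∑ j, e j * boolSign (θ j) - a) / Real.sqrt d ≤ U θ + v := by
    have h1 : ∑ j, e j * t j ≤ ∑ j, |t j| := Finset.sum_le_sum fun j _ => by
      refine (le_abs_self _).trans ?_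
      rw [abs_mul]
      exact mul_le_of_le_one_left (abs_nonneg _) (he j)
    refine le_trans ?_ (add_le_add_right hv (U θ))
    simp only [U]
    rw [← add_div]
    gcongr
    simp_rw [mul_sub]
    rw [Finset.sum_sub_distrib]
    linarith
  calc _ ≤ ∑ θ, signWeight t θ * (1 / 2 + k * (U θ + v) + k ^ 2 / 2 * (U θ + v) ^ 2) := by
        refine Finset.sum_le_sum fun θ _ => mul_le_mul_of_nonneg_left ?_ (signWeight_nonneg ht θ)
        exact (ramp_mono hk (hle θ)).trans (ramp_le _ _)
    _ = ∑ θ, ((1 / 2 + k * v + k ^ 2 / 2 * v ^ 2) * signWeight t θ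
          + (k + k ^ 2 * v) * (signWeight t θ * U θ) +
          k ^ 2 / 2 * (signWeight t θ * U θ ^ 2)) :=
        Finset.sum_congr rfl fun θ _ => by ring
    _ = 1 / 2 + k * v + k ^ 2 / 2 * v ^ 2 + k ^ 2 / 2 * ∑ θ, signWeight t θ * U θ ^ 2 := by
        rw [Finset.sum_add_distrib, Finset.sum_add_distrib, ← Finset.mul_sum, ← Finset.mul_sum,
          ← Finset.mul_sum, m0, m1]
        ring
    _ ≤ _ := by nlinarith [sq_nonneg k]

lemma le_sum_signWeight_ramp {d : ℕ} (hd : 1 ≤ d) {t e : Fin d → ℝ} (ht : ∀ j, |t j| ≤ 1)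
    (he : ∀ j, |e j| ≤ 1) (het : ∀ j, e j * t j = |t j|) {k a v : ℝ} (hk : 0 ≤ k)
    (hv : v ≤ (∑ j, |t j| - a) / Real.sqrt d) :
    1 / 2 + k * v - k ^ 2 / 2 * (1 + v ^ 2) ≤
      ∑ θ, signWeight t θ * ramp k ((∑ j, e j * boolSign (θ j) - a) / Real.sqrt d) := by
  obtain ⟨m0, m1, m2⟩ := signWeight_moments hd ht he
  set U : (Fin d → Bool) → ℝ := fun θ => (∑ j, e j * (boolSign (θ j) - t j)) / Real.sqrt d
  have hle (θ : Fin d → Bool) : U θ + v ≤ (∑ j, e j * boolSign (θ j) - a) / Real.sqrt d := by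
    refine (add_le_add_right hv (U θ)).trans (le_of_eq ?_)
    simp only [U]
    rw [← add_div]
    congr 1
    simp_rw [mul_sub, het]
    rw [Finset.sum_sub_distrib]
    ring
  calc 1 / 2 + k * v - k ^ 2 / 2 * (1 + v ^ 2)
      ≤ 1 / 2 + k * v - k ^ 2 / 2 * v ^ 2 - k ^ 2 / 2 * ∑ θ, signWeight t θ * U θ ^ 2 := by
        nlinarith [sq_nonneg k]
    _ = ∑ θ, ((1 / 2 + k * v - k ^ 2 / 2 * v ^ 2) * signWeight t θ
          + (k - k ^ 2 * v) * (signWeight t θ * U θ) -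
          k ^ 2 / 2 * (signWeight t θ * U θ ^ 2)) := by
        rw [Finset.sum_sub_distrib, Finset.sum_add_distrib, ← Finset.mul_sum, ← Finset.mul_sum,
          ← Finset.mul_sum, m0, m1]
        ring
    _ = ∑ θ, signWeight t θ * (1 / 2 + k * (U θ + v) - k ^ 2 / 2 * (U θ + v) ^ 2) :=
        Finset.sum_congr rfl fun θ _ => by ring
    _ ≤ _ := by
        refine Finset.sum_le_sum fun θ _ => mul_le_mul_of_nonneg_left ?_ (signWeight_nonneg ht θ)
        exact (le_ramp _ _).trans (ramp_mono hk (hle θ))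

lemma sum_half_pow_mul_integral_pi {d : ℕ} {Y : Fin d → Type*} [∀ j, MeasurableSpace (Y j)]
    (ν : ∀ j, Measure (Y j)) [∀ j, IsProbabilityMeasure (ν j)] (h : ∀ j, Y j → ℝ)
    (hm : ∀ j, Measurable (h j)) (h1 : ∀ j y, |h j y| ≤ 1)
    {R : ∀ j, Bool → Measure (Y j)}
    (hR : ∀ j b, R j b = (ν j).withDensity (fun y => ENNReal.ofReal (1 + boolSign b * h j y)))
    {ψ : (Fin d → Bool) → (∀ j, Y j) → ℝ} (hψ : ∀ θ, Measurable (ψ θ))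
    (hb : ∀ θ z, |ψ θ z| ≤ 1) :
    ∑ θ : Fin d → Bool, (1 / 2 : ℝ) ^ d * ∫ z, ψ θ z ∂(Measure.pi fun j => R j (θ j)) =
      ∫ z, ∑ θ, signWeight (fun j => h j (z j)) θ * ψ θ z ∂(Measure.pi ν) := by
  have hwm (θ : Fin d → Bool) : Measurable fun z : ∀ j, Y j =>
      ∏ j, (1 + boolSign (θ j) * h j (z j)) :=
    Finset.measurable_prod _ fun j _ =>
      (((hm j).comp (measurable_pi_apply j)).const_mul _).const_add _
  have hw0 (θ : Fin d → Bool) (j) (y : Y j) : 0 ≤ 1 + boolSign (θ j) * h j y :=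
    one_add_boolSign_mul_nonneg (h1 j y) _
  have hw2 (θ : Fin d → Bool) (j) (y : Y j) : |1 + boolSign (θ j) * h j y| ≤ 2 := by
    have := abs_le.1 (h1 j y)
    rw [abs_of_nonneg (hw0 θ j y)]
    cases θ j <;> simp only [boolSign] <;> norm_num <;> linarith
  have hsw (z : ∀ j, Y j) (θ : Fin d → Bool) : signWeight (fun j => h j (z j)) θ =
      (1 / 2 : ℝ) ^ d * ∏ j, (1 + boolSign (θ j) * h j (z j)) := by
    simp [signWeight, Finset.prod_mul_distrib, div_eq_inv_mul]
  simp_rw [hsw, mul_assoc]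
  rw [integral_finsetSum]
  · refine Finset.sum_congr rfl fun θ _ => ?_
    rw [integral_const_mul]
    congr 1
    simp_rw [hR]
    rw [pi_withDensity_ofReal ν (fun j y => 1 + boolSign (θ j) * h j y)
      (fun j => ((hm j).const_mul _).const_add _) (hw0 θ) (hw2 θ)]
    exact integral_withDensity_ofReal _ (hwm θ) (fun z => Finset.prod_nonneg fun j _ => hw0 θ j _) _
  · intro θ _
    refine Integrable.const_mul ?_ _
    refine integrable_of_abs_le ((hwm θ).mul (hψ θ)) (C := 2 ^ d * 1) fun z => ?_
    rw [abs_mul]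
    refine mul_le_mul ?_ (hb θ z) (abs_nonneg _) (by positivity)
    rw [Finset.abs_prod]
    refine (Finset.prod_le_prod (fun _ _ => abs_nonneg _) fun j _ => hw2 θ j (z j)).trans ?_
    simp

lemma integral_quadratic {Ω : Type*} [MeasurableSpace Ω] (μ : Measure Ω) [IsProbabilityMeasure μ]
    {V : Ω → ℝ} (hV : Measurable V) {C : ℝ} (hC : ∀ z, |V z| ≤ C) (h0 : ∫ z, V z ∂μ = 0)
    (k r b : ℝ) :
    Integrable (fun z => 1 / 2 + k * (V z + b) + r * (1 + (V z + b) ^ 2)) μ ∧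
    ∫ z, (1 / 2 + k * (V z + b) + r * (1 + (V z + b) ^ 2)) ∂μ =
      1 / 2 + k * b + r * (1 + ∫ z, V z ^ 2 ∂μ + b ^ 2) := by
  have i1 : Integrable V μ := integrable_of_abs_le hV hC
  have i2 : Integrable (fun z => V z ^ 2) μ :=
    integrable_of_abs_le (hV.pow_const 2) (C := C ^ 2) fun z => by
      rw [abs_pow]; exact pow_le_pow_left₀ (abs_nonneg _) (hC z) 2
  have e : (fun z => 1 / 2 + k * (V z + b) + r * (1 + (V z + b) ^ 2)) = fun z =>
      (1 / 2 + k * b + r * (1 + b ^ 2)) + ((k + 2 * r * b) * V z + r * V z ^ 2) := by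
    ext z; ring
  have i3 : Integrable (fun z => (k + 2 * r * b) * V z + r * V z ^ 2) μ :=
    (i1.const_mul _).add (i2.const_mul _)
  rw [e]
  refine ⟨(integrable_const _).add i3, ?_⟩
  rw [integral_add (integrable_const _) i3, integral_add (i1.const_mul _) (i2.const_mul _),
    integral_const_mul, integral_const_mul, h0]
  simp
  ring

lemma pi_centered_abs_moments {d : ℕ} (hd : 1 ≤ d) {Y : Fin d → Type*}
    [∀ j, MeasurableSpace (Y j)]
    (ν : ∀ j, Measure (Y j)) [∀ j, IsProbabilityMeasure (ν j)] (h : ∀ j, Y j → ℝ)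
    (hm : ∀ j, Measurable (h j)) (h1 : ∀ j y, |h j y| ≤ 1) (k r b : ℝ) :
    ∃ V : (∀ j, Y j) → ℝ,
      (∀ z, V z = (∑ j, (|h j (z j)| - ∫ y, |h j y| ∂(ν j))) / Real.sqrt d) ∧
      Integrable (fun z => 1 / 2 + k * (V z + b) + r * (1 + (V z + b) ^ 2)) (Measure.pi ν) ∧
      ∃ s ≤ 1, ∫ z, (1 / 2 + k * (V z + b) + r * (1 + (V z + b) ^ 2)) ∂(Measure.pi ν) =
        1 / 2 + k * b + r * (1 + s + b ^ 2) := by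
  have hi (j) : Integrable (fun y => |h j y|) (ν j) :=
    (integrable_of_abs_le (hm j) (h1 j)).abs
  have t0 (j) : 0 ≤ ∫ y, |h j y| ∂(ν j) := integral_nonneg fun y => abs_nonneg _
  have t1 (j) : ∫ y, |h j y| ∂(ν j) ≤ 1 := by
    simpa using integral_mono (hi j) (integrable_const (1 : ℝ)) (h1 j)
  have hb (j) (y : Y j) : |(|h j y| - ∫ y, |h j y| ∂(ν j))| ≤ 1 :=
    abs_le.2 ⟨by linarith [abs_nonneg (h j y), t1 j], by linarith [h1 j y, t0 j]⟩
  have hcm (j) : Measurable fun y => |h j y| - ∫ y, |h j y| ∂(ν j) :=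
    (continuous_abs.measurable.comp (hm j)).sub_const _
  have hVm : Measurable fun z : ∀ j, Y j =>
      (∑ j, (|h j (z j)| - ∫ y, |h j y| ∂(ν j))) / Real.sqrt d :=
    (Finset.measurable_sum _ fun j _ => (hcm j).comp (measurable_pi_apply j)).div_const _
  obtain ⟨m1, m2⟩ := pi_scaled_sum_moments hd ν (fun j y => |h j y| - ∫ y, |h j y| ∂(ν j)) hcm hb
    (fun j => by rw [integral_sub (hi j) (integrable_const _)]; simp)
    (fun j => by
      have hb2 (y : Y j) : (|h j y| - ∫ y, |h j y| ∂(ν j)) ^ 2 ≤ 1 :=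
        (sq_le_one_iff_abs_le_one _).2 (hb j y)
      have hi2 : Integrable (fun y => (|h j y| - ∫ y, |h j y| ∂(ν j)) ^ 2) (ν j) :=
        integrable_of_abs_le ((hcm j).pow_const 2) (C := 1)
          fun y => by rw [abs_of_nonneg (sq_nonneg _)]; exact hb2 y
      simpa using integral_mono hi2 (integrable_const (1 : ℝ)) hb2)
  obtain ⟨q1, q2⟩ := integral_quadratic (Measure.pi ν) hVm (C := d / Real.sqrt d) (fun z => by
    rw [abs_div, abs_of_nonneg (Real.sqrt_nonneg _)]
    gcongr
    refine (Finset.abs_sum_le_sum_abs _ _).trans ((Finset.sum_le_sum fun j _ => hb j _).trans ?_)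
    simp) m1 k r b
  exact ⟨_, fun _ => rfl, q1, _, m2, q2⟩

lemma sum_half_pow_mul_integral_iid {d N : ℕ} {X : Fin d → Type*} [∀ j, MeasurableSpace (X j)]
    {q : ∀ j, Bool → Measure (X j)} [∀ j b, IsProbabilityMeasure (q j b)]
    (ν : ∀ j, Measure (Fin N → X j)) [∀ j, IsProbabilityMeasure (ν j)]
    (h : ∀ j, (Fin N → X j) → ℝ)
    (hm : ∀ j, Measurable (h j)) (h1 : ∀ j y, |h j y| ≤ 1)
    (hR : ∀ j b, (Measure.pi fun _ : Fin N => q j b) =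
      (ν j).withDensity (fun y => ENNReal.ofReal (1 + boolSign b * h j y)))
    {ψ : (Fin d → Bool) → (Fin N → ∀ j, X j) → ℝ} (hψ : ∀ θ, Measurable (ψ θ))
    (hb : ∀ θ z, |ψ θ z| ≤ 1) :
    ∑ θ : Fin d → Bool, (1 / 2 : ℝ) ^ d *
        ∫ x, ψ θ x ∂(Measure.pi fun _ : Fin N => Measure.pi fun j => q j (θ j)) =
      ∫ z, ∑ θ, signWeight (fun j => h j (z j)) θ * ψ θ (fun i j => z j i) ∂(Measure.pi ν) := by
  have hmeas : Measurable fun (z : ∀ j, Fin N → X j) (i : Fin N) (j : Fin d) => z j i := by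
    fun_prop
  rw [← sum_half_pow_mul_integral_pi ν h hm h1 hR (ψ := fun θ z => ψ θ (fun i j => z j i))
    (fun θ => (hψ θ).comp hmeas) (fun θ z => hb θ _)]
  refine Finset.sum_congr rfl fun θ _ => ?_
  rw [pi_pi_eq_map_swap, integral_map hmeas.aemeasurable (hψ θ).aestronglyMeasurable]

/-- The statistic counting signed agreements between `θ` and the signs of the `h j`, normalised
and passed through `ramp`. -/
noncomputable def signTest {d N : ℕ} {X : Fin d → Type*} (h : ∀ j, (Fin N → X j) → ℝ)
    (k a : ℝ) (θ : Fin d → Bool) (y : Fin N → ∀ j, X j) : ℝ :=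
  ramp k ((∑ j, (if 0 ≤ h j (fun i => y i j) then 1 else -1) * boolSign (θ j) - a) / Real.sqrt d)

lemma measurable_signTest {d N : ℕ} {X : Fin d → Type*} [∀ j, MeasurableSpace (X j)]
    {h : ∀ j, (Fin N → X j) → ℝ} (hm : ∀ j, Measurable (h j)) (k a : ℝ) (θ : Fin d → Bool) :
    Measurable (signTest h k a θ) := by
  refine (measurable_ramp k).comp (((Finset.measurable_sum _ fun j _ => ?_).sub_const _).div_const _)
  refine Measurable.mul_const (Measurable.ite ?_ measurable_const measurable_const) _
  exact measurableSet_le measurable_const ((hm j).comp (by fun_prop))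

lemma abs_signTest_le_one {d N : ℕ} {X : Fin d → Type*} (h : ∀ j, (Fin N → X j) → ℝ)
    (k a : ℝ) (θ : Fin d → Bool) (y : Fin N → ∀ j, X j) : |signTest h k a θ y| ≤ 1 := by
  rw [signTest, abs_of_nonneg (ramp_nonneg _ _)]
  exact ramp_le_one _ _

lemma abs_ite_sign_le_one (p : Prop) [Decidable p] : |(if p then 1 else -1 : ℝ)| ≤ 1 := by
  split_ifs <;> simp

lemma le_sum_integral_signTest {d N : ℕ} (hd : 1 ≤ d) {X : Fin d → Type*}
    [∀ j, MeasurableSpace (X j)]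
    {q : ∀ j, Bool → Measure (X j)} [∀ j b, IsProbabilityMeasure (q j b)]
    (ν : ∀ j, Measure (Fin N → X j)) [∀ j, IsProbabilityMeasure (ν j)]
    (h : ∀ j, (Fin N → X j) → ℝ)
    (hm : ∀ j, Measurable (h j)) (h1 : ∀ j y, |h j y| ≤ 1)
    (hR : ∀ j b, (Measure.pi fun _ : Fin N => q j b) =
      (ν j).withDensity (fun y => ENNReal.ofReal (1 + boolSign b * h j y)))
    {k β : ℝ} (hk : 0 ≤ k) {α : Fin d → ℝ}
    (hα : ∀ j, α j + β / Real.sqrt d ≤ ∫ y, |h j y| ∂(ν j)) :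
    1 / 2 + k * β - k ^ 2 / 2 * (2 + β ^ 2) ≤
      ∑ θ : Fin d → Bool, (1 / 2 : ℝ) ^ d * ∫ x, signTest h k (∑ j, α j) θ x
        ∂(Measure.pi fun _ : Fin N => Measure.pi fun j => q j (θ j)) := by
  rw [sum_half_pow_mul_integral_iid ν h hm h1 hR (measurable_signTest hm k _)
    (abs_signTest_le_one h k _)]
  obtain ⟨V, hV, hi, s, hs, hI⟩ := pi_centered_abs_moments hd ν h hm h1 k (-(k ^ 2 / 2)) β
  have hd0 : (0 : ℝ) < Real.sqrt d := Real.sqrt_pos.2 (by exact_mod_cast hd)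
  have hmeas : Measurable fun (z : ∀ j, Fin N → X j) (i : Fin N) (j : Fin d) => z j i := by
    fun_prop
  have hswm (θ : Fin d → Bool) :
      Measurable fun z : ∀ j, Fin N → X j => signWeight (fun j => h j (z j)) θ :=
    Finset.measurable_prod _ fun j _ =>
      ((((hm j).comp (measurable_pi_apply j)).const_mul _).const_add _).div_const _
  have hw1 (z : ∀ j, Fin N → X j) :=
    (signWeight_moments hd (t := fun j => h j (z j)) (e := 0) (fun j => h1 j _) (by simp)).1
  have hw0 (z : ∀ j, Fin N → X j) := signWeight_nonneg (t := fun j => h j (z j)) (fun j => h1 j _)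
  have hint : Integrable (fun z : ∀ j, Fin N → X j => ∑ θ, signWeight (fun j => h j (z j)) θ *
      signTest h k (∑ j, α j) θ (fun i j => z j i)) (Measure.pi ν) := by
    refine integrable_of_abs_le (C := 1) (Finset.measurable_sum _ fun θ _ =>
      (hswm θ).mul ((measurable_signTest hm k _ θ).comp hmeas)) fun z => ?_
    refine (Finset.abs_sum_le_sum_abs _ _).trans ((Finset.sum_le_sum fun θ _ => ?_).trans
      (hw1 z).le)
    rw [abs_mul, abs_of_nonneg (hw0 z θ)]
    exact mul_le_of_le_one_right (hw0 z θ) (abs_signTest_le_one h k _ θ _)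
  refine le_trans (le_of_le_of_eq ?_ hI.symm) (integral_mono hi hint fun z => ?_)
  · nlinarith [sq_nonneg k]
  · have hv : V z + β ≤ (∑ j, |h j (z j)| - ∑ j, α j) / Real.sqrt d := by
      rw [hV, Finset.sum_sub_distrib, ← sub_nonneg]
      have hsum := Finset.sum_le_sum fun j (_ : j ∈ Finset.univ) => hα j
      rw [Finset.sum_add_distrib] at hsum
      have e1 : ∑ _j : Fin d, β / Real.sqrt d = β * Real.sqrt d := by
        simp only [Finset.sum_const, Finset.card_univ, Fintype.card_fin, nsmul_eq_mul]
        rw [mul_div_left_comm, Real.div_sqrt]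
      rw [e1] at hsum
      have e2 : (∑ j, |h j (z j)| - ∑ j, α j) / Real.sqrt d -
          ((∑ j, |h j (z j)| - ∑ j, ∫ y, |h j y| ∂(ν j)) / Real.sqrt d + β) =
          (∑ j, ∫ y, |h j y| ∂(ν j) - (∑ j, α j + β * Real.sqrt d)) / Real.sqrt d := by
        field_simp
        ring
      rw [e2]
      exact div_nonneg (by linarith) hd0.le
    refine le_trans (le_of_eq ?_) (le_sum_signWeight_ramp hd (fun j => h1 j (z j))
      (e := fun j => if 0 ≤ h j (z j) then 1 else -1) (fun j => abs_ite_sign_le_one _)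
      (fun j => ?_) hk hv)
    · ring
    · split_ifs with h0
      · rw [one_mul, abs_of_nonneg h0]
      · rw [abs_of_neg (not_le.1 h0)]; ring

lemma sum_integral_signTest_bind_le {d n N : ℕ} (hd : 1 ≤ d) {X : Fin d → Type*}
    [∀ j, MeasurableSpace (X j)]
    {q : ∀ j, Bool → Measure (X j)} [∀ j b, IsProbabilityMeasure (q j b)]
    (ν : ∀ j, Measure (Fin n → X j)) [∀ j, IsProbabilityMeasure (ν j)]
    (h : ∀ j, (Fin n → X j) → ℝ)
    (hm : ∀ j, Measurable (h j)) (h1 : ∀ j y, |h j y| ≤ 1)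
    (hR : ∀ j b, (Measure.pi fun _ : Fin n => q j b) =
      (ν j).withDensity (fun y => ENNReal.ofReal (1 + boolSign b * h j y)))
    {k β : ℝ} (hk : 0 ≤ k) {α : Fin d → ℝ}
    (hα : ∀ j, ∫ y, |h j y| ∂(ν j) ≤ α j - β / Real.sqrt d)
    {h' : ∀ j, (Fin N → X j) → ℝ} (hm' : ∀ j, Measurable (h' j))
    (T : Kernel (Fin n → ∀ j, X j) (Fin N → ∀ j, X j)) [IsMarkovKernel T] :
    ∑ θ : Fin d → Bool, (1 / 2 : ℝ) ^ d * ∫ x, signTest h' k (∑ j, α j) θ x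
        ∂((Measure.pi fun _ : Fin n => Measure.pi fun j => q j (θ j)).bind T) ≤
      1 / 2 - k * β + k ^ 2 / 2 * (2 + β ^ 2) := by
  set φ := signTest h' k (∑ j, α j)
  have hφm := measurable_signTest hm' k (∑ j, α j)
  have hφ1 := abs_signTest_le_one h' k (∑ j, α j)
  have hφi (θ x) : Integrable (φ θ) (T x) := integrable_of_abs_le (hφm θ) (hφ1 θ)
  have hψm (θ : Fin d → Bool) : Measurable fun x => ∫ y, φ θ y ∂(T x) :=
    ((hφm θ).stronglyMeasurable.integral_kernel (κ := T)).measurable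
  have hψ1 (θ : Fin d → Bool) (x) : |∫ y, φ θ y ∂(T x)| ≤ 1 := by
    refine (abs_integral_le_integral_abs).trans ?_
    simpa using integral_mono (hφi θ x).abs (integrable_const (1 : ℝ)) (hφ1 θ)
  have hbind (θ : Fin d → Bool) := integral_bind_eq
    (Measure.pi fun _ : Fin n => Measure.pi fun j => q j (θ j)) T (hφm θ) (hφ1 θ)
  rw [Finset.sum_congr rfl fun θ _ => congrArg _ (hbind θ),
    sum_half_pow_mul_integral_iid ν h hm h1 hR hψm hψ1]
  obtain ⟨V, hV, hi, s, hs, hI⟩ := pi_centered_abs_moments hd ν h hm h1 k (k ^ 2 / 2) (-β)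
  have hd0 : (0 : ℝ) < Real.sqrt d := Real.sqrt_pos.2 (by exact_mod_cast hd)
  have hmeas : Measurable fun (z : ∀ j, Fin n → X j) (i : Fin n) (j : Fin d) => z j i := by
    fun_prop
  have hswm (θ : Fin d → Bool) :
      Measurable fun z : ∀ j, Fin n → X j => signWeight (fun j => h j (z j)) θ :=
    Finset.measurable_prod _ fun j _ =>
      ((((hm j).comp (measurable_pi_apply j)).const_mul _).const_add _).div_const _
  have hw1 (z : ∀ j, Fin n → X j) :=
    (signWeight_moments hd (t := fun j => h j (z j)) (e := 0) (fun j => h1 j _) (by simp)).1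
  have hw0 (z : ∀ j, Fin n → X j) := signWeight_nonneg (t := fun j => h j (z j)) (fun j => h1 j _)
  have hint : Integrable (fun z : ∀ j, Fin n → X j => ∑ θ, signWeight (fun j => h j (z j)) θ *
      ∫ y, φ θ y ∂(T fun i j => z j i)) (Measure.pi ν) := by
    refine integrable_of_abs_le (C := 1) (Finset.measurable_sum _ fun θ _ =>
      (hswm θ).mul ((hψm θ).comp hmeas)) fun z => ?_
    refine (Finset.abs_sum_le_sum_abs _ _).trans ((Finset.sum_le_sum fun θ _ => ?_).trans
      (hw1 z).le)
    rw [abs_mul, abs_of_nonneg (hw0 z θ)]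
    exact mul_le_of_le_one_right (hw0 z θ) (hψ1 θ _)
  refine (integral_mono hint hi fun z => ?_).trans (hI.le.trans ?_)
  · have hv : (∑ j, |h j (z j)| - ∑ j, α j) / Real.sqrt d ≤ V z + -β := by
      rw [hV, Finset.sum_sub_distrib, ← sub_nonneg]
      have hsum := Finset.sum_le_sum fun j (_ : j ∈ Finset.univ) => hα j
      rw [Finset.sum_sub_distrib] at hsum
      have e1 : ∑ _j : Fin d, β / Real.sqrt d = β * Real.sqrt d := by
        simp only [Finset.sum_const, Finset.card_univ, Fintype.card_fin, nsmul_eq_mul]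
        rw [mul_div_left_comm, Real.div_sqrt]
      rw [e1] at hsum
      have e2 : ((∑ j, |h j (z j)| - ∑ j, ∫ y, |h j y| ∂(ν j)) / Real.sqrt d + -β) -
          (∑ j, |h j (z j)| - ∑ j, α j) / Real.sqrt d =
          (∑ j, α j - β * Real.sqrt d - ∑ j, ∫ y, |h j y| ∂(ν j)) / Real.sqrt d := by
        field_simp
        ring
      rw [e2]
      exact div_nonneg (by linarith) hd0.le
    have hi' (θ) : Integrable (fun y => signWeight (fun j => h j (z j)) θ * φ θ y)
      (T fun i j => z j i) := (hφi θ _).const_mul _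
    have hpull (θ) : signWeight (fun j => h j (z j)) θ * ∫ y, φ θ y ∂(T fun i j => z j i) =
        ∫ y, signWeight (fun j => h j (z j)) θ * φ θ y ∂(T fun i j => z j i) :=
      (integral_const_mul _ _).symm
    beta_reduce
    rw [Finset.sum_congr rfl fun θ _ => hpull θ, ← integral_finsetSum _ fun θ _ => hi' θ]
    refine (integral_mono (integrable_finsetSum _ fun θ _ => hi' θ) (integrable_const _)
      fun y => sum_signWeight_ramp_le hd (fun j => h1 j (z j))
      (e := fun j => if 0 ≤ h' j (fun i => y i j) then 1 else -1)
      (fun j => abs_ite_sign_le_one _) hk hv).trans (le_of_eq ?_)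
    simp
  · nlinarith [sq_nonneg k]

/-- Lower bound criterion for product models.
Fix `0 < α_lo < α_hi < 1` and `β > 0`. There is a constant `c > 0`, depending only on
`(α_lo, α_hi, β)`, such that for every product model: if in each coordinate `j` there
are two parameters whose `n`-fold products are at TV distance at most `α_j − β/√d`
while their `(n+m)`-fold products are at TV distance at least `α_j + β/√d`, for some
`α_j ∈ (α_lo, α_hi)`, then `ε*(𝒫, n, m) ≥ c`. -/
theorem product_model_amplification_lower_bound
    (αlo αhi β : ℝ) (h0 : 0 < αlo) (h1 : αlo < αhi) (h2 : αhi < 1) (hβ : 0 < β) :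
    ∃ c : ℝ, 0 < c ∧
      ∀ (d n m : ℕ), 1 ≤ d → 1 ≤ n →
      ∀ (X : Fin d → Type*) [∀ j, MeasurableSpace (X j)]
        (Θ : Fin d → Type*) (p : ∀ j, Θ j → Measure (X j)),
        (∀ j t, IsProbabilityMeasure (p j t)) →
      ∀ (θp θm : ∀ j, Θ j) (α : Fin d → ℝ),
        (∀ j, α j ∈ Set.Ioo αlo αhi) →
        (∀ j, tvDist (Measure.pi fun _ : Fin n => p j (θp j))
            (Measure.pi fun _ : Fin n => p j (θm j)) ≤ α j - β / Real.sqrt d) →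
        (∀ j, α j + β / Real.sqrt d ≤
            tvDist (Measure.pi fun _ : Fin (n + m) => p j (θp j))
              (Measure.pi fun _ : Fin (n + m) => p j (θm j))) →
        c ≤ ampErr (fun θ : (∀ j, Θ j) => Measure.pi fun j => p j (θ j)) n m := by
  refine ⟨β ^ 2 / (2 + β ^ 2), by positivity, ?_⟩
  intro d n m hd hn X _ Θ p hp θp θm α _ hle hge
  set k : ℝ := β / (2 + β ^ 2) with hkdef
  have hk : 0 ≤ k := by positivity
  let ϑ : ∀ j, Bool → Θ j := fun j b => if b then θp j else θm j
  let q : ∀ j, Bool → Measure (X j) := fun j b => p j (ϑ j b)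
  have hq (j b) : IsProbabilityMeasure (q j b) := hp j _
  choose ν hν h hm h1 hR using fun j => withDensity_two_sided
    fun b => Measure.pi fun _ : Fin n => q j b
  choose ν' hν' h' hm' h1' hR' using fun j => withDensity_two_sided
    fun b => Measure.pi fun _ : Fin (n + m) => q j b
  have htv (j) : ∫ y, |h j y| ∂(ν j) ≤ α j - β / Real.sqrt d :=
    (tvDist_eq_integral_abs (hm j) (h1 j) (hR j)).symm.trans_le (hle j)
  have htv' (j) : α j + β / Real.sqrt d ≤ ∫ y, |h' j y| ∂(ν' j) :=
    (hge j).trans_eq (tvDist_eq_integral_abs (hm' j) (h1' j) (hR' j))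
  have hne (j) : Nonempty (X j) := (p j (θp j)).nonempty_of_neZero
  have hker : Nonempty {T : Kernel (Fin n → ∀ j, X j) (Fin (n + m) → ∀ j, X j) //
      IsMarkovKernel T} :=
    ⟨⟨Kernel.const _ (Measure.dirac (Classical.arbitrary _)), inferInstance⟩⟩
  refine le_ciInf fun T => ?_
  have hT : IsMarkovKernel T.1 := T.2
  have hbind (μ : Measure (Fin n → ∀ j, X j)) [IsProbabilityMeasure μ] :
      IsProbabilityMeasure (μ.bind T.1) := by
    have e : μ.bind T.1 = (T.1 ∘ₖ Kernel.const Unit μ) () := by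
      rw [Kernel.comp_apply, Kernel.const_apply]
    rw [e]; infer_instance
  set S : ℝ := ⨆ θ : ∀ j, Θ j, tvDist (Measure.pi fun _ : Fin (n + m) => Measure.pi fun j =>
    p j (θ j)) ((Measure.pi fun _ : Fin n => Measure.pi fun j => p j (θ j)).bind T.1)
  have hφm := measurable_signTest hm' k (∑ j, α j)
  have hdiff (θ : Fin d → Bool) :
      ∫ x, signTest h' k (∑ j, α j) θ x
        ∂(Measure.pi fun _ : Fin (n + m) => Measure.pi fun j => q j (θ j)) -
      ∫ x, signTest h' k (∑ j, α j) θ x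
        ∂((Measure.pi fun _ : Fin n => Measure.pi fun j => q j (θ j)).bind T.1) ≤ S := by
    refine (integral_sub_integral_le_tvDist _ _ (hφm θ) (fun y => ramp_nonneg _ _)
      fun y => ramp_le_one _ _).trans ?_
    refine le_ciSup (f := fun θ : ∀ j, Θ j => tvDist (Measure.pi fun _ : Fin (n + m) =>
      Measure.pi fun j => p j (θ j))
      ((Measure.pi fun _ : Fin n => Measure.pi fun j => p j (θ j)).bind T.1)) ⟨1, ?_⟩
      fun j => ϑ j (θ j)
    rintro _ ⟨θ', rfl⟩
    exact tvDist_le_one _ _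
  have hlow := le_sum_integral_signTest hd ν' h' hm' h1' hR' hk htv'
  have hup := sum_integral_signTest_bind_le hd ν h hm h1 hR hk htv hm' T.1
  have hsum : ∑ θ : Fin d → Bool, (1 / 2 : ℝ) ^ d * (∫ x, signTest h' k (∑ j, α j) θ x
        ∂(Measure.pi fun _ : Fin (n + m) => Measure.pi fun j => q j (θ j)) -
      ∫ x, signTest h' k (∑ j, α j) θ x
        ∂((Measure.pi fun _ : Fin n => Measure.pi fun j => q j (θ j)).bind T.1)) ≤ S := by
    refine (Finset.sum_le_sum fun θ _ => mul_le_mul_of_nonneg_left (hdiff θ)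
      (by positivity)).trans (le_of_eq ?_)
    simp
  simp_rw [mul_sub] at hsum
  rw [Finset.sum_sub_distrib] at hsum
  have hgap : β ^ 2 / (2 + β ^ 2) = 2 * (k * β) - k ^ 2 * (2 + β ^ 2) := by
    rw [hkdef]; field_simp; ring
  linarith
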